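/- Let s, y ∈ ℝⁿ, let H be a symmetric n×n real matrix, and let β > 0 with sᵀy + 1/β ≠ 0 and sᵀy + 2/β ≠ 0. Set γ = 1/(sᵀy + 1/β), ω = 1/(sᵀy + 2/β), and H₊ = (I − ω s yᵀ) H (I − ω y sᵀ) + ω[γ/ω + (γ − ω)(yᵀ H y)] s sᵀ. Then yᵀ H₊ y = (β (yᵀs)² + yᵀ H y)/(1 + β yᵀs); equivalently, yᵀ H₊ y = (β yᵀs/(1 + β yᵀs))·(yᵀs) + (1/(1 + β yᵀs))·(yᵀ H y), so yᵀ H₊ y is an affine combination of yᵀs and yᵀ H y with weights summing to one. -/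

import Mathlib

open Matrix

/-! Write `a = sᵀy` and `q = yᵀHy`. Since `y` is an eigenvector of `I - ω y sᵀ` and a left
eigenvector of `I - ω s yᵀ`, both with eigenvalue `1 - ωa`, the curvature of `H₊` along `y` is
`γa² + (1 - ωa(2 - γa))q`. The two weights satisfy `1/ω = 2/γ - a`, that is `ω(2 - γa) = γ`, so the
coefficient of `q` is `1 - γa`. Finally `γa = βa/(1 + βa)`. -/

theorem dotProduct_vecMulVec_mulVec {m n R : Type*} [Fintype m] [Fintype n] [NonUnitalSemiring R]
    (x u : m → R) (v w : n → R) :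
    x ⬝ᵥ vecMulVec u v *ᵥ w = (x ⬝ᵥ u) * (v ⬝ᵥ w) := by
  rw [dotProduct_mulVec, vecMul_vecMulVec, smul_dotProduct, smul_eq_mul]

section CommRing

variable {ι R : Type*} [Fintype ι] [DecidableEq ι] [CommRing R]

theorem one_sub_smul_vecMulVec_mulVec_self (c : R) (u v : ι → R) :
    (1 - c • vecMulVec u v) *ᵥ u = (1 - c * (v ⬝ᵥ u)) • u := by
  rw [sub_mulVec, one_mulVec, smul_mulVec, vecMulVec_mulVec, op_smul_eq_smul, smul_smul,
    sub_smul, one_smul]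

theorem vecMul_one_sub_smul_vecMulVec_self (c : R) (u v : ι → R) :
    v ᵥ* (1 - c • vecMulVec u v) = (1 - c * (v ⬝ᵥ u)) • v := by
  rw [vecMul_sub, vecMul_one, vecMul_smul, vecMul_vecMulVec, smul_smul, sub_smul, one_smul]

theorem dotProduct_one_sub_smul_vecMulVec_conj_mulVec (c : R) (u v : ι → R) (A : Matrix ι ι R) :
    v ⬝ᵥ ((1 - c • vecMulVec u v) * A * (1 - c • vecMulVec v u)) *ᵥ v =
      (1 - c * (u ⬝ᵥ v)) ^ 2 * (v ⬝ᵥ A *ᵥ v) := by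
  rw [← mulVec_mulVec, ← mulVec_mulVec, one_sub_smul_vecMulVec_mulVec_self, dotProduct_mulVec,
    vecMul_one_sub_smul_vecMulVec_self, mulVec_smul, smul_dotProduct, dotProduct_smul,
    dotProduct_comm v u, smul_eq_mul, smul_eq_mul, ← mul_assoc, ← sq]

end CommRing

theorem one_div_add_two_mul_mul_two_sub {K : Type*} [Field K] {a b : K}
    (h₁ : a + b ≠ 0) (h₂ : a + 2 * b ≠ 0) :
    1 / (a + 2 * b) * (2 - 1 / (a + b) * a) = 1 / (a + b) := by
  field_simp
  ring

section Field

variable {ι K : Type*} [Fintype ι] [DecidableEq ι] [Field K]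

/-- The SP-BFGS update `H₊` of an inverse Hessian approximation `H` along the step `s` and the
gradient difference `y`. The weights `γ` and `ω` are free parameters here; the penalty parameter `β`
enters only through the values `γ = 1 / (sᵀy + 1 / β)` and `ω = 1 / (sᵀy + 2 / β)`. -/
def spbfgsUpdate (γ ω : K) (s y : ι → K) (H : Matrix ι ι K) : Matrix ι ι K :=
  (1 - ω • vecMulVec s y) * H * (1 - ω • vecMulVec y s) +
    (ω * (γ / ω + (γ - ω) * (y ⬝ᵥ H *ᵥ y))) • vecMulVec s s

theorem dotProduct_spbfgsUpdate_mulVec (γ : K) {ω : K} (hω : ω ≠ 0) (s y : ι → K)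
    (H : Matrix ι ι K) :
    y ⬝ᵥ spbfgsUpdate γ ω s y H *ᵥ y =
      γ * (s ⬝ᵥ y) ^ 2 + (1 - ω * (2 - γ * (s ⬝ᵥ y)) * (s ⬝ᵥ y)) * (y ⬝ᵥ H *ᵥ y) := by
  rw [spbfgsUpdate, add_mulVec, dotProduct_add, dotProduct_one_sub_smul_vecMulVec_conj_mulVec,
    smul_mulVec, dotProduct_smul, dotProduct_vecMulVec_mulVec, smul_eq_mul, dotProduct_comm y s]
  field_simp
  ring

theorem dotProduct_spbfgsUpdate_mulVec_eq_affine
    {γ ω : K} (hω : ω ≠ 0) {s y : ι → K} (hγω : ω * (2 - γ * (s ⬝ᵥ y)) = γ) (H : Matrix ι ι K) :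
    y ⬝ᵥ spbfgsUpdate γ ω s y H *ᵥ y =
      γ * (s ⬝ᵥ y) * (s ⬝ᵥ y) + (1 - γ * (s ⬝ᵥ y)) * (y ⬝ᵥ H *ᵥ y) := by
  rw [dotProduct_spbfgsUpdate_mulVec γ hω, hγω]
  ring

theorem spbfgs_curvature_convex_combination_general
    (s y : ι → K) (H : Matrix ι ι K) {β : K} (hβ : β ≠ 0)
    (h1 : s ⬝ᵥ y + 1 / β ≠ 0) (h2 : s ⬝ᵥ y + 2 / β ≠ 0)
    {γ ω : K} (hγ : γ = 1 / (s ⬝ᵥ y + 1 / β)) (hω : ω = 1 / (s ⬝ᵥ y + 2 / β)) :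
    y ⬝ᵥ spbfgsUpdate γ ω s y H *ᵥ y =
        (β * (y ⬝ᵥ s) ^ 2 + y ⬝ᵥ H *ᵥ y) / (1 + β * (y ⬝ᵥ s)) ∧
      y ⬝ᵥ spbfgsUpdate γ ω s y H *ᵥ y =
        (β * (y ⬝ᵥ s) / (1 + β * (y ⬝ᵥ s))) * (y ⬝ᵥ s) +
          (1 / (1 + β * (y ⬝ᵥ s))) * (y ⬝ᵥ H *ᵥ y) ∧
      (β * (y ⬝ᵥ s) / (1 + β * (y ⬝ᵥ s))) + 1 / (1 + β * (y ⬝ᵥ s)) = 1 := by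
  have hden : 1 + β * (y ⬝ᵥ s) = β * (s ⬝ᵥ y + 1 / β) := by
    rw [mul_add, mul_one_div_cancel hβ, dotProduct_comm, add_comm]
  have hden₀ : 1 + β * (y ⬝ᵥ s) ≠ 0 := hden ▸ mul_ne_zero hβ h1
  have hω₀ : ω ≠ 0 := hω ▸ one_div_ne_zero h2
  have hγω : ω * (2 - γ * (s ⬝ᵥ y)) = γ := by
    rw [hγ, hω, ← mul_one_div 2 β, one_div_add_two_mul_mul_two_sub h1 (by rwa [mul_one_div])]
  have hγy : γ * (s ⬝ᵥ y) = β * (y ⬝ᵥ s) / (1 + β * (y ⬝ᵥ s)) := by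
    rw [hγ, hden, dotProduct_comm y s, mul_div_mul_left _ _ hβ, one_div_mul_eq_div]
  have hweights : β * (y ⬝ᵥ s) / (1 + β * (y ⬝ᵥ s)) + 1 / (1 + β * (y ⬝ᵥ s)) = 1 := by
    rw [← add_div, add_comm, div_self hden₀]
  have haffine : y ⬝ᵥ spbfgsUpdate γ ω s y H *ᵥ y =
      β * (y ⬝ᵥ s) / (1 + β * (y ⬝ᵥ s)) * (y ⬝ᵥ s) +
        1 / (1 + β * (y ⬝ᵥ s)) * (y ⬝ᵥ H *ᵥ y) := by
    rw [dotProduct_spbfgsUpdate_mulVec_eq_affine hω₀ hγω, hγy,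
      ← eq_sub_of_add_eq' hweights, dotProduct_comm s y]
  exact ⟨by rw [haffine]; ring, haffine, hweights⟩

end Field

/-- **The SP-BFGS update interpolates the curvature along `y`.**
`yᵀ H₊ y = (β (yᵀs)² + yᵀ H y)/(1 + β yᵀs)`, an affine combination of `yᵀs` and
`yᵀ H y` with weights summing to one. -/
theorem spbfgs_curvature_convex_combination
    {n : ℕ} (s y : Fin n → ℝ)
    (H : Matrix (Fin n) (Fin n) ℝ) (hH : Hᵀ = H)
    (β : ℝ) (hβ : 0 < β)
    (h1 : s ⬝ᵥ y + 1 / β ≠ 0) (h2 : s ⬝ᵥ y + 2 / β ≠ 0)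
    (γ ω : ℝ) (hγ : γ = 1 / (s ⬝ᵥ y + 1 / β)) (hω : ω = 1 / (s ⬝ᵥ y + 2 / β))
    (Hplus : Matrix (Fin n) (Fin n) ℝ)
    (hHplus : Hplus =
      (1 - ω • vecMulVec s y) * H * (1 - ω • vecMulVec y s) +
        (ω * (γ / ω + (γ - ω) * (y ⬝ᵥ H *ᵥ y))) • vecMulVec s s) :
    y ⬝ᵥ Hplus *ᵥ y = (β * (y ⬝ᵥ s) ^ 2 + y ⬝ᵥ H *ᵥ y) / (1 + β * (y ⬝ᵥ s)) ∧
      y ⬝ᵥ Hplus *ᵥ y =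
        (β * (y ⬝ᵥ s) / (1 + β * (y ⬝ᵥ s))) * (y ⬝ᵥ s) +
          (1 / (1 + β * (y ⬝ᵥ s))) * (y ⬝ᵥ H *ᵥ y) ∧
      (β * (y ⬝ᵥ s) / (1 + β * (y ⬝ᵥ s))) + 1 / (1 + β * (y ⬝ᵥ s)) = 1 := by
  subst hHplus
  exact spbfgs_curvature_convex_combination_general s y H hβ.ne' h1 h2 hγ hω
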